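/- arXiv:2102.03871 — 2 statements merged into one kernel-verified Lean document; each statement's English description precedes it below -/
import Mathlib

section
/- Let M be a quasianalytic derivation closed weight sequence such that m_k := M_k/k! is log-convex. Then the ring of germs at 0 ∈ ℝ of complex-valued E^{M}-functions has property (D): for every function f defined on an open neighborhood of 0 in ℝ and every integer j ≥ 1, if f^j and f^{j+1} are of class E^{M} on some open neighborhood of 0, then f is of class E^{M} on some open neighborhood of 0. -/
open Filter Set Asymptotics MeasureTheory

noncomputable section

/-- `M` is a weight sequence: `M 0 = 1`, positive, `M 1 ≥ 1`, log-convex and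
`M k ^ (1/k) → ∞`. -/
def IsWeightSeq (M : ℕ → ℝ) : Prop :=
  M 0 = 1 ∧ (∀ k, 0 < M k) ∧ 1 ≤ M 1 ∧
    (∀ k : ℕ, 1 ≤ k → M k ^ 2 ≤ M (k - 1) * M (k + 1)) ∧
    Tendsto (fun k : ℕ => M k ^ (1 / (k : ℝ))) atTop atTop

/-- The sequence `m k = M k / k!`. -/
def mseq (M : ℕ → ℝ) : ℕ → ℝ := fun k => M k / (Nat.factorial k : ℝ)

/-- Log-convexity of a sequence. -/
def LogConvexSeq (m : ℕ → ℝ) : Prop := ∀ k : ℕ, 1 ≤ k → m k ^ 2 ≤ m (k - 1) * m (k + 1)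

/-- `m k ^ (1/k) → ∞`. -/
def RootTendsToInfty (m : ℕ → ℝ) : Prop :=
  Tendsto (fun k : ℕ => m k ^ (1 / (k : ℝ))) atTop atTop

/-- Moderate growth of a sequence. -/
def ModerateGrowth (M : ℕ → ℝ) : Prop :=
  ∃ C : ℝ, 0 < C ∧ ∀ j k : ℕ, M (j + k) ≤ C ^ (j + k) * M j * M k

/-- Derivation closedness of a sequence. -/
def DerivClosed (M : ℕ → ℝ) : Prop :=
  ∃ C : ℝ, 0 < C ∧ ∀ k : ℕ, M (k + 1) ≤ C ^ (k + 1) * M k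

/-- Non-quasianalyticity: `∑_{k≥1} M (k-1) / M k = ∑_{k≥1} 1/μ_k < ∞`. -/
def NonQuasianalytic (M : ℕ → ℝ) : Prop := Summable fun k : ℕ => M k / M (k + 1)

/-- Quasianalyticity: `∑_{k≥1} 1/μ_k = ∞`. -/
def Quasianalytic (M : ℕ → ℝ) : Prop := ¬ NonQuasianalytic M

/-- The associated function `h_m (t) = inf_k m k * t ^ k`. -/
def hFun (m : ℕ → ℝ) (t : ℝ) : ℝ := ⨅ k : ℕ, m k * t ^ k

/-- `Γ̄_m (t) = min {k | h_m t = m k * t ^ k}`. -/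
def GammaBar (m : ℕ → ℝ) (t : ℝ) : ℕ := sInf {k : ℕ | hFun m t = m k * t ^ k}

/-- `Γ̲_m (t) = min {k | m (k+1) / m k ≥ 1 / t}`. -/
def GammaLow (m : ℕ → ℝ) (t : ℝ) : ℕ := sInf {k : ℕ | 1 / t ≤ m (k + 1) / m k}

/-- The set whose supremum is `mg (M, N)`. -/
def mgSet (M N : ℕ → ℝ) : Set ℝ :=
  {x | ∃ j k : ℕ, 1 ≤ j + k ∧ x = (M (j + k) / (N j * N k)) ^ (1 / (j + k : ℝ))}

/-- `mg (M, N) = sup_{j+k ≥ 1} (M (j+k) / (N j * N k)) ^ (1/(j+k))`. -/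
def mg (M N : ℕ → ℝ) : ℝ := sSup (mgSet M N)

/-- `mg (M, N) < ∞`. -/
def MgFinite (M N : ℕ → ℝ) : Prop := BddAbove (mgSet M N)

/-- A weight sequence is regular: `m k ^ (1/k) → ∞`, derivation closed, and
`Γ̄_m (C t) ≤ Γ̲_m t` for some `C ≥ 1`. -/
def RegularWS (M : ℕ → ℝ) : Prop :=
  RootTendsToInfty (mseq M) ∧ DerivClosed M ∧
    ∃ C : ℝ, 1 ≤ C ∧ ∀ t : ℝ, 0 < t → GammaBar (mseq M) (C * t) ≤ GammaLow (mseq M) t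

/-- `f` is of class `E^{M}` (Roumieu) on the open set `U`. -/
def RoumieuOn {E : Type*} [NormedAddCommGroup E] [NormedSpace ℝ E]
    (M : ℕ → ℝ) (f : E → ℂ) (U : Set E) : Prop :=
  ContDiffOn ℝ (⊤ : ℕ∞) f U ∧
    ∀ V : Set E, IsOpen V → IsCompact (closure V) → closure V ⊆ U →
      ∃ C σ : ℝ, 0 < C ∧ 0 < σ ∧
        ∀ x ∈ V, ∀ k : ℕ, ‖iteratedFDerivWithin ℝ k f U x‖ ≤ C * σ ^ k * M k

/-- `f` is of class `E^{(M)}` (Beurling) on the open set `U`. -/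
def BeurlingOn {E : Type*} [NormedAddCommGroup E] [NormedSpace ℝ E]
    (M : ℕ → ℝ) (f : E → ℂ) (U : Set E) : Prop :=
  ContDiffOn ℝ (⊤ : ℕ∞) f U ∧
    ∀ V : Set E, IsOpen V → IsCompact (closure V) → closure V ⊆ U →
      ∀ σ : ℝ, 0 < σ → ∃ C : ℝ, 0 < C ∧
        ∀ x ∈ V, ∀ k : ℕ, ‖iteratedFDerivWithin ℝ k f U x‖ ≤ C * σ ^ k * M k

/-- A weight matrix: a nonempty, pointwise totally ordered family of weight sequences. -/
def IsWeightMatrix (W : Set (ℕ → ℝ)) : Prop :=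
  W.Nonempty ∧ (∀ M ∈ W, IsWeightSeq M) ∧
    ∀ M ∈ W, ∀ N ∈ W, (∀ k, M k ≤ N k) ∨ (∀ k, N k ≤ M k)

/-- R-regularity of a weight matrix. -/
def RRegular (W : Set (ℕ → ℝ)) : Prop :=
  (∀ M ∈ W, RootTendsToInfty (mseq M)) ∧
    (∀ M ∈ W, ∃ N ∈ W, ∃ C : ℝ, 1 ≤ C ∧ ∀ j : ℕ, M (j + 1) ≤ C ^ (j + 1) * N j) ∧
    (∀ M ∈ W, ∃ N ∈ W, ∃ C : ℝ, 1 ≤ C ∧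
      ∀ t : ℝ, 0 < t → GammaBar (mseq N) (C * t) ≤ GammaLow (mseq M) t)

/-- B-regularity of a weight matrix. -/
def BRegular (W : Set (ℕ → ℝ)) : Prop :=
  (∀ M ∈ W, RootTendsToInfty (mseq M)) ∧
    (∀ M ∈ W, ∃ N ∈ W, ∃ C : ℝ, 1 ≤ C ∧ ∀ j : ℕ, N (j + 1) ≤ C ^ j * M j) ∧
    (∀ M ∈ W, ∃ N ∈ W, ∃ C : ℝ, 1 ≤ C ∧
      ∀ t : ℝ, 0 < t → GammaBar (mseq M) (C * t) ≤ GammaLow (mseq N) t)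

/-- R-moderate growth of a weight matrix. -/
def RModerateGrowth (W : Set (ℕ → ℝ)) : Prop := ∀ M ∈ W, ∃ N ∈ W, MgFinite M N

/-- B-moderate growth of a weight matrix. -/
def BModerateGrowth (W : Set (ℕ → ℝ)) : Prop := ∀ M ∈ W, ∃ N ∈ W, MgFinite N M

/-- `f` is of class `E^{W}` (Roumieu, weight matrix) on the open set `U`. -/
def MatrixRoumieuOn {E : Type*} [NormedAddCommGroup E] [NormedSpace ℝ E]
    (W : Set (ℕ → ℝ)) (f : E → ℂ) (U : Set E) : Prop :=
  ContDiffOn ℝ (⊤ : ℕ∞) f U ∧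
    ∀ V : Set E, IsOpen V → IsCompact (closure V) → closure V ⊆ U →
      ∃ M ∈ W, ∃ C σ : ℝ, 0 < C ∧ 0 < σ ∧
        ∀ x ∈ V, ∀ k : ℕ, ‖iteratedFDerivWithin ℝ k f U x‖ ≤ C * σ ^ k * M k

/-- `f` is of class `E^{(W)}` (Beurling, weight matrix) on the open set `U`. -/
def MatrixBeurlingOn {E : Type*} [NormedAddCommGroup E] [NormedSpace ℝ E]
    (W : Set (ℕ → ℝ)) (f : E → ℂ) (U : Set E) : Prop :=
  ContDiffOn ℝ (⊤ : ℕ∞) f U ∧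
    ∀ V : Set E, IsOpen V → IsCompact (closure V) → closure V ⊆ U →
      ∀ M ∈ W, ∀ σ : ℝ, 0 < σ → ∃ C : ℝ, 0 < C ∧
        ∀ x ∈ V, ∀ k : ℕ, ‖iteratedFDerivWithin ℝ k f U x‖ ≤ C * σ ^ k * M k

/-- `ω` is a weight function. -/
def IsWeightFunction (ω : ℝ → ℝ) : Prop :=
  ContinuousOn ω (Ici 0) ∧ MonotoneOn ω (Ici 0) ∧ (∀ t ∈ Ici (0 : ℝ), 0 ≤ ω t) ∧
    ((fun t => ω (2 * t)) =O[atTop] ω) ∧ (ω =o[atTop] fun t : ℝ => t) ∧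
    ((fun t => Real.log t) =o[atTop] ω) ∧ ConvexOn ℝ (Ici 0) fun t => ω (Real.exp t)

/-- The Young conjugate `φ*_ω (s) = sup_{t ≥ 0} (s t - ω (e^t))`. -/
def phiStar (ω : ℝ → ℝ) (s : ℝ) : ℝ := sSup ((fun t => s * t - ω (Real.exp t)) '' Ici 0)

/-- Non-quasianalyticity of a weight function. -/
def NonQuasianalyticW (ω : ℝ → ℝ) : Prop := IntegrableOn (fun t => ω t / t ^ 2) (Ici 1)

/-- `f` is of class `E^{ω}` (Roumieu) on the open set `U`. -/
def OmegaRoumieuOn {E : Type*} [NormedAddCommGroup E] [NormedSpace ℝ E]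
    (ω : ℝ → ℝ) (f : E → ℂ) (U : Set E) : Prop :=
  ContDiffOn ℝ (⊤ : ℕ∞) f U ∧
    ∀ V : Set E, IsOpen V → IsCompact (closure V) → closure V ⊆ U →
      ∃ C ρ : ℝ, 0 < C ∧ 0 < ρ ∧
        ∀ x ∈ V, ∀ k : ℕ,
          ‖iteratedFDerivWithin ℝ k f U x‖ ≤ C * Real.exp (phiStar ω (ρ * k) / ρ)

/-- `f` is of class `E^{(ω)}` (Beurling) on the open set `U`. -/
def OmegaBeurlingOn {E : Type*} [NormedAddCommGroup E] [NormedSpace ℝ E]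
    (ω : ℝ → ℝ) (f : E → ℂ) (U : Set E) : Prop :=
  ContDiffOn ℝ (⊤ : ℕ∞) f U ∧
    ∀ V : Set E, IsOpen V → IsCompact (closure V) → closure V ⊆ U →
      ∀ ρ : ℝ, 0 < ρ → ∃ C : ℝ, 0 < C ∧
        ∀ x ∈ V, ∀ k : ℕ,
          ‖iteratedFDerivWithin ℝ k f U x‖ ≤ C * Real.exp (phiStar ω (ρ * k) / ρ)

/-- The open ellipse `Ω_ε` with vertices `± cosh ε` and co-vertices `± i sinh ε`. -/
def OmegaE (ε : ℝ) : Set ℂ :=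
  {z : ℂ | (z.re / Real.cosh ε) ^ 2 + (z.im / Real.sinh ε) ^ 2 < 1}

/-- The sequence space `Λ^{M}`. -/
def Lambda (M : ℕ → ℝ) : Set (ℕ → ℂ) :=
  {c | ∃ ρ : ℝ, 0 < ρ ∧ ∃ C : ℝ, ∀ k, ‖c k‖ ≤ C * ρ ^ k * M k}

/-- `L(M)`: all non-quasianalytic weight sequences `N ≥ M` with `n = N/k!` log-convex. -/
def LM (M : ℕ → ℝ) : Set (ℕ → ℝ) :=
  {N | IsWeightSeq N ∧ NonQuasianalytic N ∧ (∀ k, M k ≤ N k) ∧ LogConvexSeq (mseq N)}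

/-- A quasianalytic weight sequence `M` is intersectable if `Λ^{M} = ⋂_{N ∈ L(M)} Λ^{N}`. -/
def Intersectable (M : ℕ → ℝ) : Prop := Lambda M = ⋂ N ∈ LM M, Lambda N


def DSeq (r : ℝ) (F : ℕ → ℝ → ℂ) : Prop :=
  ∀ n, ∀ x ∈ Ioo (-r) r, HasDerivAt (F n) (F (n + 1) x) x

def BdSeq (M : ℕ → ℝ) (r : ℝ) (F : ℕ → ℝ → ℂ) : Prop :=
  ∃ C σ : ℝ, 0 < C ∧ 0 < σ ∧ ∀ n, ∀ x ∈ Ioo (-r) r, ‖F n x‖ ≤ C * σ ^ n * M n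

def GoodF (M : ℕ → ℝ) (r : ℝ) (f : ℝ → ℂ) : Prop :=
  ∃ F : ℕ → ℝ → ℂ, DSeq r F ∧ BdSeq M r F ∧ ∀ x ∈ Ioo (-r) r, F 0 x = f x

/-- One step of Bang's argument. -/
lemma bang_step (N : ℕ → ℝ) (hpos : ∀ k, 0 < N k)
    (hmono : ∀ n L : ℕ, n ≤ L → N (n + 1) ≤ N (L + 1) / N L * N n)
    (r : ℝ) (F : ℕ → ℝ → ℂ) (hF : DSeq r F)
    (hb : ∀ n, ∀ x ∈ Ioo (-r) r, ‖F n x‖ ≤ N n)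
    (L : ℕ) (A : ℝ) (hA : Real.exp (-(L + 1 : ℝ)) ≤ A) (x₀ : ℝ) (hx₀ : 0 ≤ x₀)
    (h0 : ∀ n, ‖F n x₀‖ ≤ A * Real.exp n * N n) :
    ∀ n, ∀ x, x₀ ≤ x → x < r →
      ‖F n x‖ ≤ A * Real.exp n * N n * Real.exp (Real.exp 1 * (N (L + 1) / N L) * (x - x₀)) := by
  have hA0 : 0 < A := lt_of_lt_of_le (Real.exp_pos _) hA
  set μ := N (L + 1) / N L with hμ
  have hμ0 : 0 < μ := div_pos (hpos _) (hpos _)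
  have hbig : ∀ n, L + 1 ≤ n → ∀ x, x₀ ≤ x → x < r →
      ‖F n x‖ ≤ A * Real.exp n * N n * Real.exp (Real.exp 1 * μ * (x - x₀)) := by
    intro n hn x hx hxr
    have h1 := hb n x ⟨by linarith, hxr⟩
    have h2 : 1 ≤ A * Real.exp n := by
      have : Real.exp (-(L + 1 : ℝ)) * Real.exp n ≤ A * Real.exp n := by gcongr
      rw [← Real.exp_add] at this
      refine le_trans ?_ this
      apply Real.one_le_exp
      have : ((L + 1 : ℕ) : ℝ) ≤ n := by exact_mod_cast hn
      push_cast at this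
      linarith
    have h3 : 1 ≤ Real.exp (Real.exp 1 * μ * (x - x₀)) := by
      apply Real.one_le_exp
      have : 0 ≤ x - x₀ := by linarith
      positivity
    have := hpos n
    calc ‖F n x‖ ≤ 1 * N n * 1 := by linarith
      _ ≤ _ := by gcongr
  have hdown : ∀ d n, n + d = L + 1 → ∀ x, x₀ ≤ x → x < r →
      ‖F n x‖ ≤ A * Real.exp n * N n * Real.exp (Real.exp 1 * μ * (x - x₀)) := by
    intro d
    induction d with
    | zero => intro n hn; exact hbig n (by omega)
    | succ d ih =>
      intro n hn x hx hxr
      have ih' := ih (n + 1) (by omega)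
      have hd : ∀ y ∈ Icc x₀ x, HasDerivAt (F n) (F (n + 1) y) y := by
        intro y hy
        exact hF n y ⟨by linarith [hy.1], by linarith [hy.2]⟩
      refine image_norm_le_of_norm_deriv_right_le_deriv_boundary (a := x₀) (b := x)
        (f := F n) (f' := F (n + 1))
        (B := fun y => A * Real.exp n * N n * Real.exp (Real.exp 1 * μ * (y - x₀)))
        (B' := fun y => A * Real.exp n * N n *
          (Real.exp (Real.exp 1 * μ * (y - x₀)) * (Real.exp 1 * μ)))
        (fun y hy => (hd y hy).continuousAt.continuousWithinAt)
        (fun y hy => (hd y ⟨hy.1, hy.2.le⟩).hasDerivWithinAt) ?_ ?_ ?_ ⟨hx, le_rfl⟩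
      · simpa using h0 n
      · intro y
        have h1 : HasDerivAt (fun y : ℝ => Real.exp 1 * μ * (y - x₀)) (Real.exp 1 * μ) y := by
          simpa using ((hasDerivAt_id y).sub_const x₀).const_mul (Real.exp 1 * μ)
        exact (h1.exp).const_mul _
      · intro y hy
        have h1 := ih' y hy.1 (by linarith [hy.2])
        have h2 := hmono n L (by omega)
        refine h1.trans ?_
        have : Real.exp ((n + 1 : ℕ) : ℝ) = Real.exp n * Real.exp 1 := by
          push_cast; rw [Real.exp_add]
        rw [this]
        calc A * (Real.exp n * Real.exp 1) * N (n + 1) * Real.exp (Real.exp 1 * μ * (y - x₀))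
            ≤ A * (Real.exp n * Real.exp 1) * (μ * N n) *
              Real.exp (Real.exp 1 * μ * (y - x₀)) := by gcongr
          _ = _ := by ring
  intro n
  rcases le_total (L + 1) n with h | h
  · exact hbig n h
  · exact hdown (L + 1 - n) n (by omega)

lemma bang_iter (N : ℕ → ℝ) (hpos : ∀ k, 0 < N k)
    (hmono : ∀ n L : ℕ, n ≤ L → N (n + 1) ≤ N (L + 1) / N L * N n)
    (r : ℝ) (F : ℕ → ℝ → ℂ) (hF : DSeq r F)
    (hb : ∀ n, ∀ x ∈ Ioo (-r) r, ‖F n x‖ ≤ N n) (h0 : ∀ n, F n 0 = 0) :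
    ∀ d K : ℕ, ∀ x, 0 ≤ x → x < r →
      Real.exp 1 * x ≤ ∑ i ∈ Finset.range d, N (K + i) / N (K + i + 1) →
      ∀ n, ‖F n x‖ ≤ Real.exp (-(K : ℝ)) * Real.exp n * N n := by
  intro d
  induction d with
  | zero =>
    intro K x hx hxr hs n
    have he := Real.exp_pos 1
    have : x = 0 := by
      simp at hs
      nlinarith
    subst this
    rw [h0]
    have := hpos n
    simp only [norm_zero]
    positivity
  | succ d ih =>
    intro K x hx hxr hs n
    have he := Real.exp_pos 1
    rw [Finset.sum_range_succ'] at hs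
    have hq : 0 < N K / N (K + 1) := div_pos (hpos _) (hpos _)
    set q := N K / N (K + 1) with hqd
    set x₀ := max 0 (x - q / Real.exp 1) with hx₀
    have hx0 : 0 ≤ x₀ := le_max_left _ _
    have hxx : x₀ ≤ x := max_le hx (by have := div_pos hq he; linarith)
    have hxx' : Real.exp 1 * (x - x₀) ≤ q := by
      have : x - q / Real.exp 1 ≤ x₀ := le_max_right _ _
      have h2 : x - x₀ ≤ q / Real.exp 1 := by linarith
      rw [le_div_iff₀ he] at h2
      linarith
    have hs' : ∑ i ∈ Finset.range d, N (K + (i + 1)) / N (K + (i + 1) + 1)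
        = ∑ i ∈ Finset.range d, N (K + 1 + i) / N (K + 1 + i + 1) := by
      refine Finset.sum_congr rfl fun i _ => ?_
      rw [show K + (i + 1) = K + 1 + i by ring]
    rw [hs'] at hs
    have hnn : 0 ≤ ∑ i ∈ Finset.range d, N (K + 1 + i) / N (K + 1 + i + 1) :=
      Finset.sum_nonneg fun i _ => (div_pos (hpos _) (hpos _)).le
    have hI := ih (K + 1) x₀ hx0 (lt_of_le_of_lt hxx hxr) (by
      rcases le_total 0 (x - q / Real.exp 1) with h | h
      · rw [hx₀, max_eq_right h, mul_sub, mul_div_cancel₀ _ he.ne']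
        simp only [add_zero] at hs
        linarith
      · rw [hx₀, max_eq_left h]; simpa using hnn)
    have := bang_step N hpos hmono r F hF hb K (Real.exp (-(K + 1 : ℝ))) le_rfl x₀ hx0
      (by simpa using hI) n x hxx hxr
    refine this.trans ?_
    have h1 : Real.exp (Real.exp 1 * (N (K + 1) / N K) * (x - x₀)) ≤ Real.exp 1 := by
      apply Real.exp_le_exp.mpr
      have h3 : N (K + 1) / N K * q = 1 := by
        rw [hqd]; have := (hpos K).ne'; have := (hpos (K+1)).ne'; field_simp
      have h4 : 0 < N (K + 1) / N K := div_pos (hpos _) (hpos _)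
      nlinarith
    have h2 : Real.exp (-(K : ℝ)) = Real.exp (-(K + 1 : ℝ)) * Real.exp 1 := by
      rw [← Real.exp_add]; congr 1; ring
    have := hpos n
    calc _ ≤ Real.exp (-(K + 1 : ℝ)) * Real.exp n * N n * Real.exp 1 := by gcongr
      _ = _ := by rw [h2]; ring

lemma bang_zero (N : ℕ → ℝ) (hpos : ∀ k, 0 < N k)
    (hmono : ∀ n L : ℕ, n ≤ L → N (n + 1) ≤ N (L + 1) / N L * N n)
    (hq : ¬ Summable fun k : ℕ => N k / N (k + 1))
    (r : ℝ) (F : ℕ → ℝ → ℂ) (hF : DSeq r F)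
    (hb : ∀ n, ∀ x ∈ Ioo (-r) r, ‖F n x‖ ≤ N n) (h0 : ∀ n, F n 0 = 0)
    (x : ℝ) (hx : 0 ≤ x) (hxr : x < r) : F 0 x = 0 := by
  have key : ∀ K : ℕ, ‖F 0 x‖ ≤ Real.exp (-(K : ℝ)) * N 0 := by
    intro K
    have h1 : ¬ Summable fun k : ℕ => N (K + k) / N (K + k + 1) := by
      intro h
      apply hq
      rw [← summable_nat_add_iff K]
      refine h.congr fun k => ?_
      rw [add_comm K k]
    rw [not_summable_iff_tendsto_nat_atTop_of_nonneg
      (fun k => (div_pos (hpos _) (hpos _)).le)] at h1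
    obtain ⟨d, hd⟩ := (h1.eventually_ge_atTop (Real.exp 1 * x)).exists
    simpa using bang_iter N hpos hmono r F hF hb h0 d K x hx hxr hd 0
  have hlim : Tendsto (fun K : ℕ => Real.exp (-(K : ℝ)) * N 0) atTop (nhds (0 * N 0)) := by
    refine Tendsto.mul_const _ ?_
    exact Real.tendsto_exp_neg_atTop_nhds_zero.comp tendsto_natCast_atTop_atTop
  rw [zero_mul] at hlim
  have := ge_of_tendsto' hlim key
  exact norm_le_zero_iff.mp this

lemma ratio_mono (M : ℕ → ℝ) (hM : IsWeightSeq M) (n L : ℕ) (h : n ≤ L) :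
    M (n + 1) ≤ M (L + 1) / M L * M n := by
  obtain ⟨-, hpos, -, hlc, -⟩ := hM
  have hm : Monotone fun k => M (k + 1) / M k := by
    refine monotone_nat_of_le_succ fun k => ?_
    rw [div_le_div_iff₀ (hpos _) (hpos _)]
    have := hlc (k + 1) (by omega)
    simp at this
    nlinarith
  have := hm h
  simp only at this
  rwa [div_le_iff₀ (hpos n)] at this

/-- Denjoy-Carleman. -/
lemma denjoy_carleman (M : ℕ → ℝ) (hM : IsWeightSeq M) (hq : Quasianalytic M)
    (r : ℝ) (F : ℕ → ℝ → ℂ) (hF : DSeq r F) (hb : BdSeq M r F) (h0 : ∀ n, F n 0 = 0) :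
    ∀ x ∈ Ioo (-r) r, F 0 x = 0 := by
  obtain ⟨C, σ, hC, hσ, hb⟩ := hb
  have hpos := hM.2.1
  have hNpos : ∀ k, 0 < C * σ ^ k * M k := fun k => by have := hpos k; positivity
  have hmono : ∀ n L : ℕ, n ≤ L → C * σ ^ (n + 1) * M (n + 1) ≤
      C * σ ^ (L + 1) * M (L + 1) / (C * σ ^ L * M L) * (C * σ ^ n * M n) := by
    intro n L h
    have h1 := ratio_mono M hM n L h
    have h2 := hpos L
    calc C * σ ^ (n + 1) * M (n + 1) ≤ C * σ ^ (n + 1) * (M (L + 1) / M L * M n) := by gcongr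
      _ = _ := by field_simp; ring
  have hq' : ¬ Summable fun k : ℕ => C * σ ^ k * M k / (C * σ ^ (k + 1) * M (k + 1)) := by
    intro h
    apply hq
    refine (h.mul_left σ).congr fun k => ?_
    have := (hpos (k + 1)).ne'
    field_simp
    ring
  intro x hx
  rcases le_total 0 x with h | h
  · exact bang_zero (fun k => C * σ ^ k * M k) hNpos hmono hq' r F hF hb h0 x h hx.2
  · have := bang_zero (fun k => C * σ ^ k * M k) hNpos hmono hq' r
      (fun n y => (-1) ^ n * F n (-y)) ?_ ?_ ?_ (-x) (by linarith) (by linarith [hx.1])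
    · simpa using this
    · intro n y hy
      have h1 := hF n (-y) ⟨by linarith [hy.2], by linarith [hy.1]⟩
      have h2 := (h1.scomp y (hasDerivAt_neg y)).const_mul ((-1 : ℂ) ^ n)
      refine h2.congr_deriv ?_
      simp only [pow_succ, neg_smul, one_smul]
      ring
    · intro n y hy
      simpa using hb n (-y) ⟨by linarith [hy.2], by linarith [hy.1]⟩
    · intro n; simp [h0]

lemma logconvex_mul_le (a : ℕ → ℝ) (h0 : a 0 = 1) (hpos : ∀ k, 0 < a k)
    (hlc : ∀ k : ℕ, 1 ≤ k → a k ^ 2 ≤ a (k - 1) * a (k + 1)) (k l : ℕ) :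
    a k * a l ≤ a (k + l) := by
  have hm : Monotone fun k => a (k + 1) / a k := by
    refine monotone_nat_of_le_succ fun k => ?_
    rw [div_le_div_iff₀ (hpos _) (hpos _)]
    have := hlc (k + 1) (by omega)
    simp at this
    nlinarith
  induction l with
  | zero => simp [h0]
  | succ l ih =>
    have h1 := hm (show l ≤ k + l by omega)
    simp only at h1
    rw [div_le_iff₀ (hpos l)] at h1
    have h2 := hpos k
    have h3 := hpos (k + l)
    have h4 := hpos (k + l + 1)
    calc a k * a (l + 1) ≤ a k * (a (k + l + 1) / a (k + l) * a l) := by gcongr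
      _ = a (k + l + 1) / a (k + l) * (a k * a l) := by ring
      _ ≤ a (k + l + 1) / a (k + l) * a (k + l) := by gcongr
      _ = a (k + (l + 1)) := by field_simp; rfl

def leib (F G : ℕ → ℝ → ℂ) (n : ℕ) (x : ℝ) : ℂ :=
  ∑ k ∈ Finset.range (n + 1), (n.choose k : ℂ) * (F k x * G (n - k) x)

lemma leib_dseq (r : ℝ) (F G : ℕ → ℝ → ℂ) (hF : DSeq r F) (hG : DSeq r G) :
    DSeq r (leib F G) := by
  intro n x hx
  have h : HasDerivAt (leib F G n) (∑ k ∈ Finset.range (n + 1), (n.choose k : ℂ) *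
      (F (k + 1) x * G (n - k) x + F k x * G (n - k + 1) x)) x := by
    refine HasDerivAt.fun_sum fun k _ => ?_
    exact ((hF k x hx).mul (hG (n - k) x hx)).const_mul _
  convert h using 1
  unfold leib
  rw [Finset.sum_choose_succ_mul (fun i j => F i x * G j x) n, ← Finset.sum_add_distrib]
  refine Finset.sum_congr rfl fun k hk => ?_
  rw [Finset.mem_range] at hk
  rw [show n + 1 - k = n - k + 1 by omega]
  ring

lemma good_mul (M : ℕ → ℝ) (hM : IsWeightSeq M) (r : ℝ) (f g : ℝ → ℂ)
    (hf : GoodF M r f) (hg : GoodF M r g) : GoodF M r (fun x => f x * g x) := by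
  obtain ⟨F, hF, ⟨C, σ, hC, hσ, hFb⟩, hF0⟩ := hf
  obtain ⟨G, hG, ⟨D, τ, hD, hτ, hGb⟩, hG0⟩ := hg
  refine ⟨leib F G, leib_dseq r F G hF hG, ⟨C * D, σ + τ, by positivity, by positivity, ?_⟩, ?_⟩
  · intro n x hx
    have hpos := hM.2.1
    calc ‖leib F G n x‖ ≤ ∑ k ∈ Finset.range (n + 1), (n.choose k : ℝ) *
          ((C * σ ^ k * M k) * (D * τ ^ (n - k) * M (n - k))) := by
          refine norm_sum_le_of_le _ fun k _ => ?_
          rw [norm_mul, norm_mul, Complex.norm_natCast]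
          have h1 := hFb k x hx
          have h2 := hGb (n - k) x hx
          gcongr
          exact (norm_nonneg _).trans h1
      _ ≤ ∑ k ∈ Finset.range (n + 1), C * D * M n * (σ ^ k * τ ^ (n - k) * (n.choose k : ℝ)) := by
          refine Finset.sum_le_sum fun k hk => ?_
          rw [Finset.mem_range] at hk
          have := logconvex_mul_le M hM.1 hpos hM.2.2.2.1 k (n - k)
          rw [show k + (n - k) = n by omega] at this
          calc _ = C * D * (σ ^ k * τ ^ (n - k) * (n.choose k : ℝ)) * (M k * M (n - k)) := by ring
            _ ≤ C * D * (σ ^ k * τ ^ (n - k) * (n.choose k : ℝ)) * M n := by gcongr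
            _ = _ := by ring
      _ = _ := by rw [← Finset.mul_sum, ← add_pow]; ring
  · intro x hx
    simp [leib, hF0 x hx, hG0 x hx]

lemma hasDerivAt_iter (f : ℝ → ℂ) (U : Set ℝ) (hU : IsOpen U)
    (hf : ContDiffOn ℝ (⊤ : ℕ∞) f U) (n : ℕ) (x : ℝ) (hx : x ∈ U) :
    HasDerivAt (iteratedDerivWithin n f U) (iteratedDerivWithin (n + 1) f U x) x := by
  have h1 := hf.differentiableOn_iteratedDerivWithin (m := n)
    (by exact_mod_cast WithTop.coe_lt_top n) hU.uniqueDiffOn x hx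
  have h2 := h1.hasDerivWithinAt
  rw [← iteratedDerivWithin_succ] at h2
  exact h2.hasDerivAt (hU.mem_nhds hx)

lemma iter_eq (r : ℝ) (f : ℝ → ℂ) (F : ℕ → ℝ → ℂ) (hF : DSeq r F)
    (h0 : ∀ x ∈ Ioo (-r) r, F 0 x = f x) (n : ℕ) :
    ∀ x ∈ Ioo (-r) r, iteratedDerivWithin n f (Ioo (-r) r) x = F n x := by
  induction n with
  | zero => intro x hx; simp [h0 x hx]
  | succ n ih =>
    intro x hx
    rw [iteratedDerivWithin_succ, derivWithin_congr ih (ih x hx)]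
    exact (hF n x hx).hasDerivWithinAt.derivWithin (isOpen_Ioo.uniqueDiffWithinAt hx)

lemma contDiffOn_of_dseq (r : ℝ) (f : ℝ → ℂ) (F : ℕ → ℝ → ℂ) (hF : DSeq r F)
    (h0 : ∀ x ∈ Ioo (-r) r, F 0 x = f x) : ContDiffOn ℝ (⊤ : ℕ∞) f (Ioo (-r) r) := by
  refine contDiffOn_of_differentiableOn_deriv fun m _ => ?_
  have : DifferentiableOn ℝ (F m) (Ioo (-r) r) := fun x hx =>
    (hF m x hx).differentiableAt.differentiableWithinAt
  exact this.congr (iter_eq r f F hF h0 m)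

lemma good_mono (M : ℕ → ℝ) (r s : ℝ) (hsr : s ≤ r) (f : ℝ → ℂ) (h : GoodF M r f) :
    GoodF M s f := by
  have hsub : Ioo (-s) s ⊆ Ioo (-r) r := Ioo_subset_Ioo (by linarith) hsr
  obtain ⟨F, hF, ⟨C, σ, hC, hσ, hb⟩, h0⟩ := h
  exact ⟨F, fun n x hx => hF n x (hsub hx), ⟨C, σ, hC, hσ, fun n x hx => hb n x (hsub hx)⟩,
    fun x hx => h0 x (hsub hx)⟩

lemma good_congr (M : ℕ → ℝ) (r : ℝ) (f g : ℝ → ℂ) (h : GoodF M r f)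
    (hfg : ∀ x ∈ Ioo (-r) r, f x = g x) : GoodF M r g := by
  obtain ⟨F, hF, hb, h0⟩ := h
  exact ⟨F, hF, hb, fun x hx => (h0 x hx).trans (hfg x hx)⟩

lemma roumieu_of_good (M : ℕ → ℝ) (r : ℝ) (f : ℝ → ℂ) (h : GoodF M r f) :
    RoumieuOn M f (Ioo (-r) r) := by
  obtain ⟨F, hF, ⟨C, σ, hC, hσ, hb⟩, h0⟩ := h
  refine ⟨contDiffOn_of_dseq r f F hF h0, fun V _ _ hV => ⟨C, σ, hC, hσ, fun x hx k => ?_⟩⟩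
  have hx' := hV (subset_closure hx)
  rw [norm_iteratedFDerivWithin_eq_norm_iteratedDerivWithin, iter_eq r f F hF h0 k x hx']
  exact hb k x hx'

lemma good_of_roumieu (M : ℕ → ℝ) (f : ℝ → ℂ) (U : Set ℝ) (hU : IsOpen U) (h0 : (0 : ℝ) ∈ U)
    (h : RoumieuOn M f U) : ∃ r : ℝ, 0 < r ∧ GoodF M r f := by
  obtain ⟨r, hr, hrU⟩ := Metric.nhds_basis_closedBall.mem_iff.mp (hU.mem_nhds h0)
  rw [Real.closedBall_eq_Icc, zero_sub, zero_add] at hrU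
  have hcl : closure (Ioo (-r) r) = Icc (-r) r := closure_Ioo (by linarith)
  obtain ⟨C, σ, hC, hσ, hb⟩ := h.2 (Ioo (-r) r) isOpen_Ioo (by rw [hcl]; exact isCompact_Icc)
    (by rw [hcl]; exact hrU)
  refine ⟨r, hr, fun n => iteratedDerivWithin n f U, ?_, ⟨C, σ, hC, hσ, ?_⟩, by simp⟩
  · intro n x hx
    exact hasDerivAt_iter f U hU h.1 n x (hrU (Ioo_subset_Icc_self hx))
  · intro n x hx
    rw [← norm_iteratedFDerivWithin_eq_norm_iteratedDerivWithin]
    exact hb x hx n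

lemma good_const (M : ℕ → ℝ) (hM : IsWeightSeq M) (r : ℝ) (c : ℂ) :
    GoodF M r (fun _ => c) := by
  refine ⟨fun n _ => if n = 0 then c else 0, ?_, ⟨‖c‖ + 1, 1, by positivity, one_pos, ?_⟩, by simp⟩
  · intro n x _
    simpa using hasDerivAt_const x _
  · intro n x _
    have := hM.2.1 n
    by_cases h : n = 0
    · subst h; simp [hM.1]
    · simp only [h, if_false, norm_zero]; positivity

lemma good_id (M : ℕ → ℝ) (hM : IsWeightSeq M) (r : ℝ) (hr : 0 < r) :
    GoodF M r (fun x => (x : ℂ)) := by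
  refine ⟨fun n x => if n = 0 then (x : ℂ) else if n = 1 then 1 else 0, ?_,
    ⟨r + 1, 1, by positivity, one_pos, ?_⟩, by simp⟩
  · intro n x _
    rcases n with _ | n
    · have := (hasDerivAt_id x).ofReal_comp
      simpa using this
    · simpa using hasDerivAt_const x _
  · intro n x hx
    have := hM.2.1 n
    rcases n with _ | _ | n
    · have := abs_lt.mpr hx
      simp [hM.1]; linarith
    · have := hM.2.2.1
      simp; nlinarith
    · simp; positivity

lemma good_pow (M : ℕ → ℝ) (hM : IsWeightSeq M) (r : ℝ) (hr : 0 < r) (p : ℕ) :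
    GoodF M r (fun x => (x : ℂ) ^ p) := by
  induction p with
  | zero => simpa using good_const M hM r 1
  | succ p ih => simpa [pow_succ] using good_mul M hM r _ _ ih (good_id M hM r hr)

lemma choose_mul_le (M : ℕ → ℝ) (hM : IsWeightSeq M) (hmlc : LogConvexSeq (mseq M)) (k l : ℕ) :
    ((k + l).choose k : ℝ) * (M k * M l) ≤ M (k + l) := by
  have hpos := hM.2.1
  have h := logconvex_mul_le (mseq M) (by simp [mseq, hM.1])
    (fun k => div_pos (hpos k) (by positivity)) hmlc k l
  unfold mseq at h
  have h2 : ((k + l).choose k : ℝ) * (k.factorial * l.factorial) = (k + l).factorial := by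
    have := Nat.add_choose_mul_factorial_mul_factorial k l
    rw [← mul_assoc, Nat.choose_symm_add]
    exact_mod_cast this
  have hk : (0 : ℝ) < k.factorial := by positivity
  have hl : (0 : ℝ) < l.factorial := by positivity
  rw [div_mul_div_comm, div_le_div_iff₀ (by positivity) (by positivity), ← h2] at h
  have h3 : (0 : ℝ) < k.factorial * l.factorial := by positivity
  refine le_of_mul_le_mul_right ?_ h3
  linarith

lemma good_inv (M : ℕ → ℝ) (hM : IsWeightSeq M) (hmlc : LogConvexSeq (mseq M)) (r : ℝ)
    (u : ℝ → ℂ) (hu : GoodF M r u) (δ : ℝ) (hδ : 0 < δ)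
    (hud : ∀ x ∈ Ioo (-r) r, δ ≤ ‖u x‖) : GoodF M r (fun x => (u x)⁻¹) := by
  obtain ⟨F, hF, ⟨C, σ, hC, hσ, hb⟩, h0⟩ := hu
  have hpos := hM.2.1
  have hne : ∀ x ∈ Ioo (-r) r, u x ≠ 0 := fun x hx => by
    rw [← norm_pos_iff]; exact hδ.trans_le (hud x hx)
  have hcd := (contDiffOn_of_dseq r u F hF h0).inv hne
  set V : ℕ → ℝ → ℂ := fun n => iteratedDerivWithin n (fun x => (u x)⁻¹) (Ioo (-r) r) with hVdef
  have hV : DSeq r V := fun n x hx => hasDerivAt_iter _ _ isOpen_Ioo hcd n x hx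
  have hV0 : ∀ x, V 0 x = (u x)⁻¹ := by intro x; simp [V]
  have hone : DSeq r (fun n _ => if n = 0 then (1 : ℂ) else 0) := by
    intro n x _
    simpa using hasDerivAt_const x _
  have hL : ∀ n, ∀ x ∈ Ioo (-r) r, leib F V n x = if n = 0 then (1 : ℂ) else 0 := by
    intro n x hx
    rw [← iter_eq r (fun _ => (1 : ℂ)) _ (leib_dseq r F V hF hV) ?_ n x hx,
      ← iter_eq r (fun _ => (1 : ℂ)) _ hone (by simp) n x hx]
    intro y hy
    simp [leib, h0 y hy, hV0, hne y hy]
  set ρ := σ * (1 + C / δ) with hρd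
  have hρ : 0 < ρ := by positivity
  refine ⟨V, hV, ⟨δ⁻¹, ρ, by positivity, hρ, ?_⟩, fun x _ => hV0 x⟩
  intro n x hx
  induction n using Nat.strong_induction_on with
  | _ n ih =>
  rcases n with _ | n
  · rw [hV0, norm_inv]
    simp only [pow_zero, mul_one, hM.1]
    exact inv_anti₀ hδ (hud x hx)
  · have h1 := hL (n + 1) x hx
    simp only [leib, Nat.succ_ne_zero, if_false] at h1
    rw [Finset.sum_range_succ'] at h1
    simp only [Nat.choose_zero_right, Nat.cast_one, one_mul, Nat.sub_zero] at h1
    have h2 : ‖F 0 x * V (n + 1) x‖ ≤ ∑ k ∈ Finset.range (n + 1),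
        C * δ⁻¹ * M (n + 1) * σ * (σ ^ k * ρ ^ (n + 1 - 1 - k)) := by
      rw [eq_neg_of_add_eq_zero_right h1, norm_neg]
      refine norm_sum_le_of_le _ fun k hk => ?_
      rw [Finset.mem_range] at hk
      have e : n + 1 - (k + 1) = n - k := by omega
      have e2 : n + 1 - 1 - k = n - k := by omega
      rw [norm_mul, norm_mul, Complex.norm_natCast, e, e2]
      have a1 := hb (k + 1) x hx
      have a2 := ih (n - k) (by omega)
      have a3 := choose_mul_le M hM hmlc (k + 1) (n - k)
      rw [show k + 1 + (n - k) = n + 1 by omega] at a3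
      calc _ ≤ ((n + 1).choose (k + 1) : ℝ) *
            ((C * σ ^ (k + 1) * M (k + 1)) * (δ⁻¹ * ρ ^ (n - k) * M (n - k))) := by
            gcongr
            exact (norm_nonneg _).trans a1
        _ = C * σ ^ (k + 1) * δ⁻¹ * ρ ^ (n - k) *
            (((n + 1).choose (k + 1) : ℝ) * (M (k + 1) * M (n - k))) := by ring
        _ ≤ C * σ ^ (k + 1) * δ⁻¹ * ρ ^ (n - k) * M (n + 1) := by gcongr
        _ = _ := by ring
    rw [← Finset.mul_sum] at h2
    have h3 := geom_sum₂_mul σ ρ (n + 1)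
    set S := ∑ k ∈ Finset.range (n + 1), σ ^ k * ρ ^ (n + 1 - 1 - k) with hS
    have h4 : S * (σ * (C / δ)) ≤ ρ ^ (n + 1) := by
      have : σ - ρ = -(σ * (C / δ)) := by rw [hρd]; ring
      rw [this] at h3
      have : 0 < σ ^ (n + 1) := by positivity
      linarith
    have h5 : δ * ‖V (n + 1) x‖ ≤ M (n + 1) * ρ ^ (n + 1) := by
      calc δ * ‖V (n + 1) x‖ ≤ ‖F 0 x‖ * ‖V (n + 1) x‖ := by
            gcongr; rw [h0 x hx]; exact hud x hx
        _ = ‖F 0 x * V (n + 1) x‖ := (norm_mul _ _).symm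
        _ ≤ _ := h2
        _ = M (n + 1) * (S * (σ * (C / δ))) := by field_simp
        _ ≤ _ := by have := hpos (n + 1); gcongr
    rw [mul_assoc, ← div_eq_inv_mul, le_div_iff₀ hδ]
    linarith

/-- The derivatives of `g(x)/x`. -/
def divSeq (F : ℕ → ℝ → ℂ) (n : ℕ) (x : ℝ) : ℂ :=
  ∫ t in (0 : ℝ)..1, (t ^ n) • F (n + 1) (t * x)

lemma mul_mem_Ioo_aux (r x t : ℝ) (hx : x ∈ Ioo (-r) r) (ht : t ∈ Icc (0 : ℝ) 1) :
    t * x ∈ Ioo (-r) r := by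
  have h := abs_lt.mpr hx
  apply abs_lt.mp
  rw [abs_mul, abs_of_nonneg ht.1]
  have := abs_nonneg x
  nlinarith [ht.2]

lemma divSeq_cont (r : ℝ) (F : ℕ → ℝ → ℂ) (hF : DSeq r F) (n k : ℕ) (x : ℝ)
    (hx : x ∈ Ioo (-r) r) :
    ContinuousOn (fun t : ℝ => (t ^ k) • F n (t * x)) (uIcc 0 1) := by
  rw [uIcc_of_le zero_le_one]
  intro t ht
  have h1 := (hF n (t * x) (mul_mem_Ioo_aux r x t hx ht)).continuousAt
  have h2 : ContinuousAt (fun t : ℝ => F n (t * x)) t :=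
    ContinuousAt.comp (g := F n) (f := fun t : ℝ => t * x) h1 (by fun_prop)
  exact ((continuous_pow k).continuousAt.smul h2).continuousWithinAt

lemma divSeq_dseq (M : ℕ → ℝ) (r : ℝ) (F : ℕ → ℝ → ℂ) (hF : DSeq r F) (hb : BdSeq M r F) :
    DSeq r (divSeq F) := by
  obtain ⟨C, σ, hC, hσ, hb⟩ := hb
  intro n x hx
  have hc := fun n k x hx => (divSeq_cont r F hF n k x hx).intervalIntegrable (μ := volume)
  refine (intervalIntegral.hasDerivAt_integral_of_dominated_loc_of_deriv_le
    (F := fun x t => (t ^ n) • F (n + 1) (t * x))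
    (F' := fun x t => (t ^ (n + 1)) • F (n + 1 + 1) (t * x))
    (s := Ioo (-r) r) (bound := fun _ => C * σ ^ (n + 1 + 1) * M (n + 1 + 1))
    (isOpen_Ioo.mem_nhds hx) ?_ (hc _ _ x hx) (hc _ _ x hx).def'.aestronglyMeasurable ?_ ?_ ?_).2
  · filter_upwards [isOpen_Ioo.mem_nhds hx] with y hy
    exact (hc _ _ y hy).def'.aestronglyMeasurable
  · refine Eventually.of_forall fun t ht y hy => ?_
    rw [uIoc_of_le zero_le_one] at ht
    have h1 := hb (n + 1 + 1) (t * y) (mul_mem_Ioo_aux r y t hy (Ioc_subset_Icc_self ht))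
    rw [norm_smul, Real.norm_of_nonneg (pow_nonneg ht.1.le _)]
    have h2 : t ^ (n + 1) ≤ 1 := pow_le_one₀ ht.1.le ht.2
    have := norm_nonneg (F (n + 1 + 1) (t * y))
    nlinarith
  · exact intervalIntegrable_const
  · refine Eventually.of_forall fun t ht y hy => ?_
    rw [uIoc_of_le zero_le_one] at ht
    have h1 := hF (n + 1) (t * y) (mul_mem_Ioo_aux r y t hy (Ioc_subset_Icc_self ht))
    have h2 : HasDerivAt (fun y : ℝ => t * y) t y := by
      simpa using (hasDerivAt_id y).const_mul t
    have h3 := (h1.scomp y h2).const_smul (t ^ n)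
    refine h3.congr_deriv ?_
    rw [smul_smul, pow_succ]

lemma divSeq_bd (M : ℕ → ℝ) (r : ℝ) (F : ℕ → ℝ → ℂ) (hb : BdSeq M r F)
    (hdc : DerivClosed M) : BdSeq M r (divSeq F) := by
  obtain ⟨C, σ, hC, hσ, hb⟩ := hb
  obtain ⟨D, hD, hdc⟩ := hdc
  refine ⟨C * σ * D, σ * D, by positivity, by positivity, fun n x hx => ?_⟩
  have h1 : ‖divSeq F n x‖ ≤ C * σ ^ (n + 1) * M (n + 1) * |1 - 0| := by
    refine intervalIntegral.norm_integral_le_of_norm_le_const fun t ht => ?_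
    rw [uIoc_of_le zero_le_one] at ht
    have h1 := hb (n + 1) (t * x) (mul_mem_Ioo_aux r x t hx (Ioc_subset_Icc_self ht))
    rw [norm_smul, Real.norm_of_nonneg (pow_nonneg ht.1.le _)]
    have h2 : t ^ n ≤ 1 := pow_le_one₀ ht.1.le ht.2
    have := norm_nonneg (F (n + 1) (t * x))
    nlinarith
  have h2 := hdc n
  simp only [sub_zero, abs_one, mul_one] at h1
  calc _ ≤ C * σ ^ (n + 1) * M (n + 1) := h1
    _ ≤ C * σ ^ (n + 1) * (D ^ (n + 1) * M n) := by gcongr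
    _ = _ := by rw [mul_pow]; ring

lemma divSeq_eq (r : ℝ) (F : ℕ → ℝ → ℂ) (hF : DSeq r F) (h0 : F 0 0 = 0) (x : ℝ)
    (hx : x ∈ Ioo (-r) r) : F 0 x = (x : ℂ) * divSeq F 0 x := by
  have h := intervalIntegral.integral_eq_sub_of_hasDerivAt (a := 0) (b := 1)
    (f := fun t : ℝ => F 0 (t * x)) (f' := fun t : ℝ => x • F 1 (t * x)) ?_ ?_
  · simp only [intervalIntegral.integral_smul, one_mul, zero_mul, h0, sub_zero] at h
    rw [← h, Complex.real_smul]
    simp only [divSeq, pow_zero, one_smul, zero_add]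
  · intro t ht
    rw [uIcc_of_le zero_le_one] at ht
    have h1 := hF 0 (t * x) (mul_mem_Ioo_aux r x t hx ht)
    have h2 : HasDerivAt (fun t : ℝ => t * x) x t := by
      simpa using (hasDerivAt_id t).mul_const x
    exact h1.scomp t h2
  · have := (divSeq_cont r F hF 1 0 x hx).intervalIntegrable (μ := volume)
    simp only [pow_zero, one_smul] at this
    exact this.smul x

lemma divSeq_zero (F : ℕ → ℝ → ℂ) (n : ℕ) :
    divSeq F n 0 = ((1 : ℝ) / (n + 1)) • F (n + 1) 0 := by
  simp only [divSeq, mul_zero]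
  rw [intervalIntegral.integral_smul_const, integral_pow]
  simp

lemma order_lemma (M : ℕ → ℝ) (hM : IsWeightSeq M) (hdc : DerivClosed M) (r : ℝ) (n : ℕ) :
    ∀ F : ℕ → ℝ → ℂ, DSeq r F → BdSeq M r F → F n 0 ≠ 0 →
    ∃ (p : ℕ) (u : ℝ → ℂ), GoodF M r u ∧ u 0 ≠ 0 ∧
      ∀ x ∈ Ioo (-r) r, F 0 x = (x : ℂ) ^ p * u x := by
  induction n with
  | zero => 
    intro F hF hb h
    exact ⟨0, F 0, ⟨F, hF, hb, fun _ _ => rfl⟩, h, by simp⟩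
  | succ n ih =>
    intro F hF hb h
    by_cases h0 : F 0 0 = 0
    · obtain ⟨p, u, hu, hu0, he⟩ := ih (divSeq F) (divSeq_dseq M r F hF hb)
        (divSeq_bd M r F hb hdc) (by
          rw [divSeq_zero]
          refine smul_ne_zero ?_ h
          positivity)
      refine ⟨p + 1, u, hu, hu0, fun x hx => ?_⟩
      rw [divSeq_eq r F hF h0 x hx, he x hx]
      ring
    · exact ⟨0, F 0, ⟨F, hF, hb, fun _ _ => rfl⟩, h0, by simp⟩

lemma good_continuousAt (M : ℕ → ℝ) (r : ℝ) (hr : 0 < r) (u : ℝ → ℂ) (hu : GoodF M r u) :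
    ContinuousAt u 0 := by
  obtain ⟨F, hF, -, h0⟩ := hu
  have hm : (0 : ℝ) ∈ Ioo (-r) r := ⟨by linarith, hr⟩
  refine (hF 0 0 hm).continuousAt.congr ?_
  filter_upwards [isOpen_Ioo.mem_nhds hm] with x hx using h0 x hx

lemma order_or_zero (M : ℕ → ℝ) (hM : IsWeightSeq M) (hq : Quasianalytic M) (hdc : DerivClosed M)
    (r : ℝ) (g : ℝ → ℂ) (hg : GoodF M r g) :
    (∀ x ∈ Ioo (-r) r, g x = 0) ∨ ∃ (p : ℕ) (u : ℝ → ℂ), GoodF M r u ∧ u 0 ≠ 0 ∧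
      ∀ x ∈ Ioo (-r) r, g x = (x : ℂ) ^ p * u x := by
  obtain ⟨F, hF, hb, h0⟩ := hg
  by_cases h : ∀ n, F n 0 = 0
  · left
    intro x hx
    rw [← h0 x hx]
    exact denjoy_carleman M hM hq r F hF hb h x hx
  · right
    push Not at h
    obtain ⟨n, hn⟩ := h
    obtain ⟨p, u, hu, hu0, he⟩ := order_lemma M hM hdc r n F hF hb hn
    exact ⟨p, u, hu, hu0, fun x hx => by rw [← h0 x hx, he x hx]⟩

lemma good_of_zero (M : ℕ → ℝ) (hM : IsWeightSeq M) (r : ℝ) (f : ℝ → ℂ) (j : ℕ)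
    (h : ∀ x ∈ Ioo (-r) r, (f ^ j) x = 0) : GoodF M r f := by
  refine good_congr M r _ f (good_const M hM r 0) fun x hx => ?_
  exact (eq_zero_of_pow_eq_zero (h x hx)).symm

lemma good_root (M : ℕ → ℝ) (hM : IsWeightSeq M) (hmlc : LogConvexSeq (mseq M))
    (f : ℝ → ℂ) (j : ℕ) (hj : 1 ≤ j) (r : ℝ) (hr : 0 < r) (n p : ℕ) (u v : ℝ → ℂ)
    (hu : GoodF M r u) (hv : GoodF M r v) (hu0 : u 0 ≠ 0) (hv0 : v 0 ≠ 0)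
    (hg : ∀ x ∈ Ioo (-r) r, (f ^ j) x = (x : ℂ) ^ n * u x)
    (hh : ∀ x ∈ Ioo (-r) r, (f ^ (j + 1)) x = (x : ℂ) ^ p * v x) :
    ∃ s : ℝ, 0 < s ∧ GoodF M s f := by
  have hm : (0 : ℝ) ∈ Ioo (-r) r := ⟨by linarith, hr⟩
  have huc := good_continuousAt M r hr u hu
  have hvc := good_continuousAt M r hr v hv
  have hord : n * (j + 1) ≤ p * j := by
    by_contra! hlt
    obtain ⟨d, hd⟩ := Nat.exists_eq_add_of_lt hlt
    have heq : ∀ x ∈ Ioo (-r) r, x ≠ 0 → v x ^ j = (x : ℂ) ^ (d + 1) * u x ^ (j + 1) := by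
      intro x hx hx0
      have h1 : ((f ^ (j + 1)) x) ^ j = ((f ^ j) x) ^ (j + 1) := by
        simp only [Pi.pow_apply]; ring
      rw [hg x hx, hh x hx, mul_pow, mul_pow, ← pow_mul, ← pow_mul, hd, add_assoc, pow_add,
        mul_assoc] at h1
      exact mul_left_cancel₀ (pow_ne_zero _ (by exact_mod_cast hx0)) h1
    have ht1 : Tendsto (fun x => v x ^ j) (nhdsWithin 0 {0}ᶜ) (nhds (v 0 ^ j)) :=
      (hvc.pow j).tendsto.mono_left nhdsWithin_le_nhds
    have ht2 : Tendsto (fun x : ℝ => (x : ℂ) ^ (d + 1) * u x ^ (j + 1)) (nhdsWithin 0 {0}ᶜ)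
        (nhds (((0 : ℝ) : ℂ) ^ (d + 1) * u 0 ^ (j + 1))) := by
      have : ContinuousAt (fun x : ℝ => (x : ℂ) ^ (d + 1) * u x ^ (j + 1)) 0 :=
        ((Complex.continuous_ofReal.continuousAt).pow _).mul (huc.pow _)
      exact this.tendsto.mono_left nhdsWithin_le_nhds
    have hee : (fun x => v x ^ j) =ᶠ[nhdsWithin 0 {0}ᶜ]
        (fun x : ℝ => (x : ℂ) ^ (d + 1) * u x ^ (j + 1)) := by
      filter_upwards [mem_nhdsWithin_of_mem_nhds (isOpen_Ioo.mem_nhds hm),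
        self_mem_nhdsWithin] with x hx hx0
      exact heq x hx hx0
    have := tendsto_nhds_unique (ht1.congr' hee) ht2
    simp at this
    exact hv0 this.1
  have hnp : n ≤ p := by nlinarith
  obtain ⟨d, rfl⟩ := Nat.exists_eq_add_of_le hnp
  have hδ : 0 < ‖u 0‖ / 2 := by have := norm_pos_iff.mpr hu0; linarith
  have hev : ∀ᶠ x in nhds (0 : ℝ), ‖u 0‖ / 2 < ‖u x‖ :=
    huc.norm.eventually_const_lt (by linarith)
  obtain ⟨s, hs, hsb⟩ := Metric.eventually_nhds_iff_ball.mp hev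
  set q := min s r with hq
  have hq0 : 0 < q := lt_min hs hr
  have hqr : q ≤ r := min_le_right _ _
  have hlow : ∀ x ∈ Ioo (-q) q, ‖u 0‖ / 2 ≤ ‖u x‖ := by
    intro x hx
    refine (hsb x ?_).le
    rw [Real.ball_eq_Ioo, zero_sub, zero_add]
    have : q ≤ s := min_le_left _ _
    exact ⟨by linarith [hx.1], by linarith [hx.2]⟩
  refine ⟨q, hq0, ?_⟩
  have hgood := good_mul M hM q _ _ (good_mul M hM q _ _ (good_pow M hM q hq0 d)
    (good_mono M r q hqr v hv))
    (good_inv M hM hmlc q u (good_mono M r q hqr u hu) _ hδ hlow)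
  refine good_congr M q _ f hgood fun x hx => ?_
  have hxr : x ∈ Ioo (-r) r := ⟨by linarith [hx.1], by linarith [hx.2]⟩
  have hux : u x ≠ 0 := by rw [← norm_pos_iff]; exact hδ.trans_le (hlow x hx)
  rw [← div_eq_mul_inv, div_eq_iff hux]
  have h1 : f x * (f ^ j) x = (f ^ (j + 1)) x := by simp only [Pi.pow_apply]; ring
  rw [hg x hxr, hh x hxr] at h1
  by_cases hxn : (x : ℂ) ^ n = 0
  · have hn : n ≠ 0 := by rintro rfl; simp at hxn
    have hx0 : x = 0 := by exact_mod_cast eq_zero_of_pow_eq_zero hxn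
    subst hx0
    have h2 := hg 0 hxr
    rw [hxn, zero_mul] at h2
    have h3 : f 0 = 0 := eq_zero_of_pow_eq_zero h2
    have hd : d ≠ 0 := by rintro rfl; simp at hord; nlinarith [Nat.pos_of_ne_zero hn]
    simp [h3, hd]
  · apply mul_left_cancel₀ hxn
    rw [pow_add] at h1
    linear_combination -h1

/-- the ring of germs at `0 ∈ ℝ` of `E^{M}`-functions has property (D)
for a quasianalytic derivation closed weight sequence `M` with `m` log-convex. -/
theorem statement2 (M : ℕ → ℝ)
    (hM : IsWeightSeq M) (hq : Quasianalytic M) (hdc : DerivClosed M)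
    (hmlc : LogConvexSeq (mseq M))
    (f : ℝ → ℂ) (j : ℕ) (hj : 1 ≤ j)
    (h1 : ∃ U : Set ℝ, IsOpen U ∧ (0 : ℝ) ∈ U ∧ RoumieuOn M (f ^ j) U)
    (h2 : ∃ U : Set ℝ, IsOpen U ∧ (0 : ℝ) ∈ U ∧ RoumieuOn M (f ^ (j + 1)) U) :
    ∃ U : Set ℝ, IsOpen U ∧ (0 : ℝ) ∈ U ∧ RoumieuOn M f U := by
  obtain ⟨U₁, hU₁, h0₁, hR₁⟩ := h1
  obtain ⟨U₂, hU₂, h0₂, hR₂⟩ := h2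
  obtain ⟨r₁, hr₁, hg₁⟩ := good_of_roumieu M _ U₁ hU₁ h0₁ hR₁
  obtain ⟨r₂, hr₂, hg₂⟩ := good_of_roumieu M _ U₂ hU₂ h0₂ hR₂
  have hr : 0 < min r₁ r₂ := lt_min hr₁ hr₂
  have hg := good_mono M r₁ _ (min_le_left r₁ r₂) _ hg₁
  have hh := good_mono M r₂ _ (min_le_right r₁ r₂) _ hg₂
  suffices h : ∃ s : ℝ, 0 < s ∧ GoodF M s f by
    obtain ⟨s, hs, hf⟩ := h
    exact ⟨Ioo (-s) s, isOpen_Ioo, ⟨by linarith, hs⟩, roumieu_of_good M s f hf⟩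
  rcases order_or_zero M hM hq hdc _ _ hg with hz | ⟨n, u, hu, hu0, hgu⟩
  · exact ⟨_, hr, good_of_zero M hM _ f j hz⟩
  rcases order_or_zero M hM hq hdc _ _ hh with hz | ⟨p, v, hv, hv0, hhv⟩
  · exact ⟨_, hr, good_of_zero M hM _ f (j + 1) hz⟩
  exact good_root M hM hmlc f j hj _ hr n p u v hu hv hu0 hv0 hgu hhv
end
end

section
/- Let L and M be positive sequences with L_0 = M_0 = 1 satisfying L ◁ M, i.e. (L_k/M_k)^{1/k} → 0 as k → ∞. Suppose m_k := M_k/k! is log-convex and m_k^{1/k} → ∞. Then there exists a weight sequence S such that s_k := S_k/k! is log-convex, s_k^{1/k} → ∞, L_k ≤ S_k for all k, and S ◁ M. Additionally S can be chosen such that: (i) if M has moderate growth then S has moderate growth; (ii) if M is derivation closed then S is derivation closed; (iii) if M is non-quasianalytic then S is non-quasianalytic. -/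
open Filter Set Asymptotics MeasureTheory

noncomputable section

lemma aux_cesaro (q : ℕ → ℝ) (hq : Tendsto q atTop atTop) :
    Tendsto (fun k : ℕ => (∑ j ∈ Finset.range k, q j) * (1 / (k : ℝ))) atTop atTop := by
  rw [tendsto_atTop]
  intro C
  obtain ⟨N, hN⟩ := eventually_atTop.1 (tendsto_atTop.1 hq (C + 1))
  set K := ∑ j ∈ Finset.range N, (q j - (C + 1)) with hK
  have h1 : ∀ k, N ≤ k → K ≤ ∑ j ∈ Finset.range k, (q j - (C + 1)) := by
    intro k hk
    induction k, hk using Nat.le_induction with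
    | base => exact le_rfl
    | succ k hk ih =>
      rw [Finset.sum_range_succ]
      have := hN k hk
      linarith
  obtain ⟨P, hP⟩ := exists_nat_gt (-K)
  filter_upwards [eventually_ge_atTop (max N (max P 1))] with k hk
  have hkN : N ≤ k := le_trans (le_max_left _ _) hk
  have hkP : P ≤ k := le_trans (le_trans (le_max_left _ _) (le_max_right _ _)) hk
  have hk1 : 1 ≤ k := le_trans (le_trans (le_max_right _ _) (le_max_right _ _)) hk
  have h2 := h1 k hkN
  rw [Finset.sum_sub_distrib] at h2
  simp only [Finset.sum_const, Finset.card_range, nsmul_eq_mul] at h2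
  have hkP' : (P : ℝ) ≤ k := by exact_mod_cast hkP
  have hk0 : (0 : ℝ) < k := by exact_mod_cast hk1
  rw [mul_one_div, le_div_iff₀ hk0]
  nlinarith

lemma aux_exp_root (x : ℝ) (y : ℝ) : (Real.exp x) ^ y = Real.exp (x * y) := by
  rw [Real.exp_mul]

lemma aux_minorant (r : ℕ → ℝ) (hr : Tendsto r atTop atTop) :
    ∃ b : ℕ → ℝ, Monotone b ∧ Tendsto b atTop atTop ∧ ∀ k, b k ≤ r k := by
  have hbdd : BddBelow (Set.range r) := by
    obtain ⟨N, hN⟩ := eventually_atTop.1 (tendsto_atTop.1 hr 0)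
    obtain ⟨B, hB⟩ := ((Finset.range N).image r).bddBelow
    refine ⟨min B 0, ?_⟩
    rintro _ ⟨k, rfl⟩
    rcases lt_or_ge k N with h | h
    · exact (min_le_left _ _).trans
        (hB (Finset.mem_coe.2 (Finset.mem_image_of_mem r (Finset.mem_range.2 h))))
    · exact (min_le_right _ _).trans (hN k h)
  have hb : ∀ k, BddBelow (Set.range fun j => r (k + j)) := fun k =>
    hbdd.mono (by rintro _ ⟨j, rfl⟩; exact ⟨k + j, rfl⟩)
  refine ⟨fun k => ⨅ j, r (k + j), ?_, ?_, ?_⟩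
  · refine monotone_nat_of_le_succ fun k => ?_
    refine le_ciInf fun j => ?_
    have := ciInf_le (hb k) (j + 1)
    rwa [show k + (j + 1) = k + 1 + j by ring] at this
  · rw [tendsto_atTop]
    intro C
    obtain ⟨N, hN⟩ := eventually_atTop.1 (tendsto_atTop.1 hr C)
    filter_upwards [eventually_ge_atTop N] with k hk
    exact le_ciInf fun j => hN _ (by omega)
  · intro k
    exact ciInf_le (hb k) 0

def auxE (a b : ℕ → ℝ) : ℕ → ℝ
  | 0 => b 0
  | k + 1 => min (b (k + 1)) (auxE a b k + (a (k + 1) - a k) / 2)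

lemma aux_main (a r : ℕ → ℝ) (ha : Monotone a) (hat : Tendsto a atTop atTop)
    (hr : Tendsto r atTop atTop) :
    ∃ e : ℕ → ℝ, Monotone e ∧ Tendsto e atTop atTop ∧ (∀ k, e k ≤ r k) ∧
      Monotone (fun k => a k - e k) ∧ Tendsto (fun k => a k - e k) atTop atTop ∧
      0 ≤ a 0 - e 0 := by
  obtain ⟨b', hb'm, hb't, hb'r⟩ := aux_minorant r hr
  obtain ⟨b, hbm, hbt, hbr, hb0⟩ : ∃ b : ℕ → ℝ, Monotone b ∧ Tendsto b atTop atTop ∧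
      (∀ k, b k ≤ r k) ∧ b 0 ≤ a 0 := by
    refine ⟨fun k => b' k - |b' 0 - a 0|, ?_, ?_, ?_, ?_⟩
    · intro i j h
      have := hb'm h
      dsimp only
      linarith
    · exact tendsto_atTop_add_const_right _ (-|b' 0 - a 0|) hb't
    · intro k
      have := hb'r k
      have := abs_nonneg (b' 0 - a 0)
      linarith
    · have := le_abs_self (b' 0 - a 0)
      linarith
  have heb : ∀ k, auxE a b k ≤ b k := by
    intro k
    cases k with
    | zero => exact le_rfl
    | succ k => exact min_le_left _ _
  have hinc : ∀ k, auxE a b (k + 1) ≤ auxE a b k + (a (k + 1) - a k) / 2 :=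
    fun k => min_le_right _ _
  have has : ∀ k, a k ≤ a (k + 1) := fun k => ha (Nat.le_succ k)
  have hem : Monotone (auxE a b) := by
    refine monotone_nat_of_le_succ fun k => ?_
    refine le_min ((heb k).trans (hbm (Nat.le_succ k))) ?_
    have := has k
    linarith
  have hlow : ∀ N k, N ≤ k → min (b N) (auxE a b N + (a k - a N) / 2) ≤ auxE a b k := by
    intro N k hk
    induction k, hk using Nat.le_induction with
    | base => simp
    | succ k hk ih =>
      have h1 := has k
      refine le_min ((min_le_left _ _).trans (hbm (by omega))) ?_
      rcases le_total (b N) (auxE a b N + (a k - a N) / 2) with h | h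
      · rw [min_eq_left h] at ih
        exact (min_le_left _ _).trans (by linarith)
      · rw [min_eq_right h] at ih
        exact (min_le_right _ _).trans (by linarith)
  refine ⟨auxE a b, hem, ?_, fun k => (heb k).trans (hbr k), ?_, ?_, ?_⟩
  · rw [tendsto_atTop]
    intro C
    obtain ⟨N, hN⟩ := (tendsto_atTop.1 hbt C).exists
    filter_upwards [eventually_ge_atTop N,
      tendsto_atTop.1 hat (2 * (C - auxE a b N) + a N)] with k hk h2
    exact (le_min hN (by linarith)).trans (hlow N k hk)
  · refine monotone_nat_of_le_succ fun k => ?_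
    have := has k
    have := hinc k
    linarith
  · have h : ∀ k, a k / 2 + (a 0 / 2 - auxE a b 0) ≤ a k - auxE a b k := by
      intro k
      induction k with
      | zero => linarith
      | succ k ih =>
        have := hinc k
        linarith
    exact tendsto_atTop_mono h (tendsto_atTop_add_const_right _ _
      (hat.atTop_div_const (by norm_num)))
  · have : auxE a b 0 = b 0 := rfl
    linarith

lemma aux_summable (x : ℕ → ℝ) (hx : ∀ k, 0 < x k) (hs : Summable x) :
    ∃ y : ℕ → ℝ, Tendsto y atTop atTop ∧ Summable (fun k => x k * Real.exp (y k)) := by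
  set T : ℕ → ℝ := fun k => ∑' j, x (j + k) with hT
  have hsk : ∀ k, Summable (fun j => x (j + k)) := fun k => (summable_nat_add_iff k).2 hs
  have hTpos : ∀ k, 0 < T k := fun k =>
    (hsk k).tsum_pos (fun j => (hx _).le) 0 (hx _)
  have hTs : ∀ k, T k = x k + T (k + 1) := by
    intro k
    have := (hsk k).tsum_eq_zero_add
    simp only [hT]
    rw [this]
    simp only [zero_add]
    congr 2
    ext j
    congr 1
    ring
  have hT0 : Tendsto T atTop (nhds 0) := tendsto_sum_nat_add x
  have hTw : Tendsto T atTop (nhdsWithin 0 (Set.Ioi 0)) :=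
    tendsto_nhdsWithin_iff.2 ⟨hT0, Eventually.of_forall hTpos⟩
  have hlog := Real.tendsto_log_nhdsGT_zero.comp hTw
  refine ⟨fun k => -(Real.log (T k)) / 2, ?_, ?_⟩
  · exact (tendsto_neg_atBot_atTop.comp hlog).atTop_div_const (by norm_num)
  have hexp : ∀ k, Real.exp (-(Real.log (T k)) / 2) = (Real.sqrt (T k))⁻¹ := by
    intro k
    rw [← Real.exp_log (Real.sqrt_pos.2 (hTpos k)), ← Real.exp_neg, Real.log_sqrt (hTpos k).le]
    congr 1
    ring
  have hb : ∀ k, x k * Real.exp (-(Real.log (T k)) / 2) ≤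
      2 * (Real.sqrt (T k) - Real.sqrt (T (k + 1))) := by
    intro k
    rw [hexp]
    have h1 := Real.sqrt_pos.2 (hTpos k)
    have h2 := Real.sq_sqrt (hTpos k).le
    have h3 := Real.sq_sqrt (hTpos (k + 1)).le
    have h4 := hTs k
    rw [← div_eq_mul_inv, div_le_iff₀ h1]
    nlinarith [sq_nonneg (Real.sqrt (T k) - Real.sqrt (T (k + 1)))]
  refine summable_of_sum_range_le (c := 2 * Real.sqrt (T 0))
    (fun k => mul_nonneg (hx k).le (Real.exp_pos _).le) fun n => ?_
  have : ∑ k ∈ Finset.range n, x k * Real.exp (-(Real.log (T k)) / 2) ≤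
      2 * (Real.sqrt (T 0) - Real.sqrt (T n)) := by
    induction n with
    | zero => simp
    | succ n ih =>
      rw [Finset.sum_range_succ]
      have := hb n
      linarith
  have h5 := Real.sqrt_nonneg (T n)
  linarith

/-- reduction lemma: if `L ◁ M`, `m` log-convex and `m_k^{1/k} → ∞`, then
there is a weight sequence `S` with `s` log-convex, `s_k^{1/k} → ∞`, `L ≤ S ◁ M`,
inheriting moderate growth, derivation closedness and non-quasianalyticity from `M`. -/
theorem statement3 (L M : ℕ → ℝ)
    (hL0 : L 0 = 1) (hM0 : M 0 = 1)
    (hLpos : ∀ k, 0 < L k) (hMpos : ∀ k, 0 < M k)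
    (hLM : Tendsto (fun k : ℕ => (L k / M k) ^ (1 / (k : ℝ))) atTop (nhds 0))
    (hmlc : LogConvexSeq (mseq M)) (hmroot : RootTendsToInfty (mseq M)) :
    ∃ S : ℕ → ℝ, IsWeightSeq S ∧ LogConvexSeq (mseq S) ∧ RootTendsToInfty (mseq S) ∧
      (∀ k, L k ≤ S k) ∧
      Tendsto (fun k : ℕ => (S k / M k) ^ (1 / (k : ℝ))) atTop (nhds 0) ∧
      (ModerateGrowth M → ModerateGrowth S) ∧
      (DerivClosed M → DerivClosed S) ∧
      (NonQuasianalytic M → NonQuasianalytic S) := by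
  set m := mseq M with hm
  have hfpos : ∀ k : ℕ, (0 : ℝ) < (Nat.factorial k : ℝ) := fun k => by
    exact_mod_cast Nat.factorial_pos k
  have hmpos : ∀ k, 0 < m k := fun k => div_pos (hMpos k) (hfpos k)
  set a : ℕ → ℝ := fun k => Real.log (m (k + 1)) - Real.log (m k) with ha
  have hm0 : m 0 = 1 := by simp [hm, mseq, hM0]
  have hsum : ∀ k, ∑ j ∈ Finset.range k, a j = Real.log (m k) := by
    intro k
    simp only [ha]
    rw [Finset.sum_range_sub (fun j => Real.log (m j)), hm0]
    simp
  have hmexp : ∀ k, m k = Real.exp (∑ j ∈ Finset.range k, a j) := by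
    intro k
    rw [hsum, Real.exp_log (hmpos k)]
  have ham : Monotone a := by
    refine monotone_nat_of_le_succ fun k => ?_
    have h := hmlc (k + 1) (by omega)
    simp only [Nat.add_sub_cancel] at h
    have h' := Real.log_le_log (pow_pos (hmpos _) 2) h
    rw [Real.log_pow, Real.log_mul (hmpos _).ne' (hmpos _).ne'] at h'
    simp only [ha]
    push_cast at h'
    linarith
  have hat : Tendsto a atTop atTop := by
    refine tendsto_atTop_atTop_of_monotone ham fun B => ?_
    by_contra hcon
    push Not at hcon
    have h1 : ∀ k : ℕ, 1 ≤ k → m k ^ (1 / (k : ℝ)) ≤ Real.exp B := by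
      intro k hk
      have hk0 : (0 : ℝ) < k := by exact_mod_cast hk
      rw [hmexp k, aux_exp_root, Real.exp_le_exp, mul_one_div, div_le_iff₀ hk0]
      have := Finset.sum_le_card_nsmul (Finset.range k) a B (fun j _ => (hcon j).le)
      simp at this
      linarith
    obtain ⟨k, hk1, hk2⟩ := ((eventually_ge_atTop 1).and
      (hmroot.eventually (eventually_gt_atTop (Real.exp B)))).exists
    exact absurd (h1 k hk1) (not_le.2 hk2)
  set ℓ : ℕ → ℝ := fun k => -(Real.log (L (k + 1) / M (k + 1)) * (1 / ((k + 1 : ℕ) : ℝ))) with hℓ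
  have hLMpos : ∀ k, 0 < L k / M k := fun k => div_pos (hLpos k) (hMpos k)
  have hℓt : Tendsto ℓ atTop atTop := by
    have h1 : Tendsto (fun k : ℕ => (L k / M k) ^ (1 / (k : ℝ))) atTop
        (nhdsWithin 0 (Set.Ioi 0)) :=
      tendsto_nhdsWithin_iff.2 ⟨hLM, Eventually.of_forall fun k =>
        Real.rpow_pos_of_pos (hLMpos k) _⟩
    have h2 := tendsto_neg_atBot_atTop.comp
      ((Real.tendsto_log_nhdsGT_zero.comp h1).comp (tendsto_add_atTop_nat 1))
    refine h2.congr fun k => ?_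
    simp only [Function.comp, hℓ]
    rw [Real.log_rpow (hLMpos _)]
    ring
  obtain ⟨y, hyt, hys⟩ : ∃ y : ℕ → ℝ, Tendsto y atTop atTop ∧
      (NonQuasianalytic M → Summable fun k => M k / M (k + 1) * Real.exp (y k)) := by
    by_cases h : NonQuasianalytic M
    · obtain ⟨y, h1, h2⟩ := aux_summable (fun k => M k / M (k + 1))
        (fun k => div_pos (hMpos _) (hMpos _)) h
      exact ⟨y, h1, fun _ => h2⟩
    · exact ⟨a, hat, fun h' => absurd h' h⟩
  obtain ⟨e, hem, het, her, hqm, hqt, hq0⟩ := aux_main a (fun k => min (ℓ k) (y k)) ham hat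
    (tendsto_atTop.2 fun C => by
      filter_upwards [tendsto_atTop.1 hℓt C, tendsto_atTop.1 hyt C] with k h1 h2
      exact le_min h1 h2)
  set E : ℕ → ℝ := fun k => ∑ j ∈ Finset.range k, e j with hE
  set S : ℕ → ℝ := fun k => M k * Real.exp (-E k) with hS
  have hEs : ∀ k, E (k + 1) = E k + e k := fun k => Finset.sum_range_succ _ _
  have hE0 : E 0 = 0 := by simp [hE]
  have hSpos : ∀ k, 0 < S k := fun k => mul_pos (hMpos k) (Real.exp_pos _)
  have hs : ∀ k, mseq S k = Real.exp (∑ j ∈ Finset.range k, (a j - e j)) := by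
    intro k
    have h1 : mseq S k = m k * Real.exp (-E k) := by
      simp only [mseq, hS, hm]
      ring
    rw [h1, hmexp, ← Real.exp_add, Finset.sum_sub_distrib a e, sub_eq_add_neg]
  have hsS : ∀ k, S k = Nat.factorial k * mseq S k := by
    intro k
    have := (hfpos k).ne'
    simp only [mseq]
    field_simp
  have hspos : ∀ k, 0 < mseq S k := fun k => by rw [hs]; exact Real.exp_pos _
  have hslc : LogConvexSeq (mseq S) := by
    intro k hk
    obtain ⟨n, rfl⟩ : ∃ n, k = n + 1 := ⟨k - 1, by omega⟩
    simp only [Nat.add_sub_cancel]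
    rw [hs, hs, hs, ← Real.exp_add, ← Real.exp_nat_mul, Real.exp_le_exp]
    simp only [Finset.sum_range_succ]
    have := hqm (Nat.le_succ n)
    simp only [Nat.succ_eq_add_one] at this
    push_cast
    linarith
  have hsroot : RootTendsToInfty (mseq S) := by
    have := Real.tendsto_exp_atTop.comp (aux_cesaro _ hqt)
    refine this.congr fun k => ?_
    simp only [Function.comp]
    rw [hs, aux_exp_root]
  have hS0 : S 0 = 1 := by simp [hS, hE0, hM0]
  refine ⟨S, ⟨hS0, hSpos, ?_, ?_, ?_⟩, hslc, hsroot, ?_, ?_, ?_, ?_, ?_⟩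
  · rw [hsS, hs]
    simpa using hq0
  · intro k hk
    have h := hslc k hk
    obtain ⟨n, rfl⟩ : ∃ n, k = n + 1 := ⟨k - 1, by omega⟩
    simp only [Nat.add_sub_cancel] at h ⊢
    rw [hsS (n + 1), hsS n, hsS (n + 1 + 1)]
    have hf : ((Nat.factorial (n + 1) : ℕ) : ℝ) ^ 2 ≤
        (Nat.factorial n : ℝ) * (Nat.factorial (n + 1 + 1) : ℝ) := by
      rw [Nat.factorial_succ (n + 1), Nat.factorial_succ n]
      push_cast
      have := hfpos n
      have : (0 : ℝ) ≤ n := Nat.cast_nonneg n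
      have h3 : (0 : ℝ) < (Nat.factorial n : ℝ) ^ 2 := by positivity
      nlinarith
    calc ((Nat.factorial (n + 1) : ℝ) * mseq S (n + 1)) ^ 2
        = (Nat.factorial (n + 1) : ℝ) ^ 2 * mseq S (n + 1) ^ 2 := by ring
      _ ≤ ((Nat.factorial n : ℝ) * (Nat.factorial (n + 1 + 1) : ℝ)) *
          (mseq S n * mseq S (n + 1 + 1)) := by gcongr
      _ = _ := by ring
  · refine tendsto_atTop_mono (fun k => ?_) hsroot
    refine Real.rpow_le_rpow (hspos k).le ?_ (by positivity)
    rw [hsS k]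
    have : (1 : ℝ) ≤ Nat.factorial k := by exact_mod_cast Nat.factorial_pos k
    exact le_mul_of_one_le_left (hspos k).le this
  · intro k
    cases k with
    | zero => rw [hS0, hL0]
    | succ k =>
      have h1 : E (k + 1) ≤ (k + 1 : ℕ) * ℓ k := by
        have := Finset.sum_le_card_nsmul (Finset.range (k + 1)) e (ℓ k) (fun j hj =>
          (hem (Nat.lt_succ_iff.1 (Finset.mem_range.1 hj))).trans
            ((her k).trans (min_le_left _ _)))
        simpa using this
      have hk : ((k + 1 : ℕ) : ℝ) ≠ 0 := by exact_mod_cast Nat.succ_ne_zero k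
      have h2 : ((k + 1 : ℕ) : ℝ) * ℓ k = -Real.log (L (k + 1) / M (k + 1)) := by
        simp only [hℓ]
        field_simp
      have h3 : L (k + 1) / M (k + 1) ≤ Real.exp (-E (k + 1)) := by
        rw [← Real.log_le_iff_le_exp (hLMpos _)]
        linarith
      rw [div_le_iff₀ (hMpos _)] at h3
      simp only [hS]
      linarith
  · have := Real.tendsto_exp_neg_atTop_nhds_zero.comp (aux_cesaro _ het)
    refine this.congr fun k => ?_
    have h1 : S k / M k = Real.exp (-E k) := by
      have := (hMpos k).ne'
      simp only [hS]
      field_simp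
    rw [h1, aux_exp_root]
    simp only [Function.comp, hE]
    congr 1
    ring
  · rintro ⟨C, hC, h⟩
    refine ⟨C, hC, fun j k => ?_⟩
    have h1 : E j + E k ≤ E (j + k) := by
      induction k with
      | zero => simp [hE0]
      | succ k ih =>
        rw [← add_assoc, hEs, hEs]
        have := hem (Nat.le_add_left k j)
        linarith
    calc S (j + k) ≤ (C ^ (j + k) * M j * M k) * Real.exp (-E j + -E k) := by
          simp only [hS]
          refine mul_le_mul (h j k) (Real.exp_le_exp.2 (by linarith)) (Real.exp_pos _).le ?_
          have := hMpos j
          have := hMpos k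
          positivity
      _ = _ := by
          rw [Real.exp_add]
          simp only [hS]
          ring
  · rintro ⟨C, hC, h⟩
    refine ⟨C * Real.exp |e 0|, by positivity, fun k => ?_⟩
    have h1 : Real.exp (-e k) ≤ Real.exp |e 0| ^ (k + 1) := by
      rw [← Real.exp_nat_mul, Real.exp_le_exp]
      have h2 := hem (Nat.zero_le k)
      have h3 := neg_abs_le (e 0)
      have h4 : |e 0| ≤ ((k + 1 : ℕ) : ℝ) * |e 0| :=
        le_mul_of_one_le_left (abs_nonneg _) (by push_cast; linarith [Nat.cast_nonneg (α := ℝ) k])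
      linarith
    calc S (k + 1) = M (k + 1) * Real.exp (-e k) * Real.exp (-E k) := by
          simp only [hS]
          rw [hEs, neg_add, Real.exp_add]
          ring
      _ ≤ (C ^ (k + 1) * M k) * Real.exp |e 0| ^ (k + 1) * Real.exp (-E k) := by
          have := hMpos k
          have := h k
          gcongr
      _ = _ := by
          simp only [hS]
          rw [mul_pow]
          ring
  · intro h
    refine Summable.of_nonneg_of_le (fun k => (div_pos (hSpos _) (hSpos _)).le) (fun k => ?_)
      (hys h)
    have h1 : S k / S (k + 1) = M k / M (k + 1) * Real.exp (e k) := by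
      simp only [hS]
      rw [hEs, neg_add, Real.exp_add, Real.exp_neg (e k)]
      have := (hMpos (k + 1)).ne'
      have := (Real.exp_pos (-E k)).ne'
      have := (Real.exp_pos (e k)).ne'
      field_simp
    rw [h1]
    have h2 := div_pos (hMpos k) (hMpos (k + 1))
    have h3 : e k ≤ y k := (her k).trans (min_le_right _ _)
    gcongr
end
end
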